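/- Let k ⊂ L be a finite Galois field extension. Then k ⊂ L is catenarian (all maximal chains of intermediate fields from k to L have the same length) if and only if the lattice [k,L] of intermediate fields is supersolvable. -/

import Mathlib

/-!
By the Galois correspondence the lattice of intermediate fields is anti-isomorphic to the lattice of
subgroups of the finite group `G = Gal(L/k)`, and both properties are self-dual. The statement then
is Iwasawa's theorem that the subgroup lattice of a finite group is catenarian exactly when the group
is supersolvable, together with the fact that such subgroup lattices are supersolvable lattices.

If a finite lattice is supersolvable with distinguished maximal chain `C`, then a given saturated
chain from `⊥` to `⊤` and `C` are both saturated in the distributive sublattice they generate, so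
they have the same length by Jordan–Hölder (`IsSupersolvableLattice.isCatenarian`).

Conversely, suppose that all saturated chains of subgroups of `G` have the same length. This property
passes to subgroups and quotients, and by induction on `|G|` some chain has length `Ω |G|`, the number
of prime factors of `|G|` (`CatGroup.satChain`); hence every covering pair of subgroups has prime
index (`CatGroup.primeCovers`). The critical case of the induction is that of a simple group. All its
proper subgroups then have prime covers, hence normal `q`-complements for the smallest prime divisor
`q` of `|G|` (`PrimeCovers.hasNormalComplement`). As in Frobenius' normal complement theorem, a Sylow
`q`-subgroup controls its own fusion (`exists_fusion`), and the focal subgroup theorem shows that a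
simple group with this property is abelian (`commute_of_isSimpleGroup`).

When all covering pairs have prime index, the Sylow subgroup for the largest prime is normal, and a
minimal normal subgroup inside its center has prime order; so `G` has a chain of normal subgroups
which is saturated in the lattice of all subgroups (`PrimeCovers.normalChain`). Such a chain
`c 0 ≤ c 1 ≤ ⋯` witnesses supersolvability: given another chain `D`, the elements of the generated
sublattice are the joins `⨆ i, c i ⊓ f i` with `f` antitone with values in `D ∪ {⊥, ⊤}`. Dedekind's
law shows that such a join equals `⨅ i, c (i - 1) ⊔ f i` (`stairSup_eq`), so meets and joins are
computed pointwise in `f` and distributivity follows (`distrib_of_normal_chain`).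
-/

/-- A maximal chain of length `n` from `T` to `U`: each step is a covering. -/
def IsMaxChainFromTo {α : Type*} [PartialOrder α] (T U : α) (n : ℕ)
    (c : Fin (n + 1) → α) : Prop :=
  c 0 = T ∧ c (Fin.last n) = U ∧ ∀ i : Fin n, c i.castSucc ⋖ c i.succ

/-- The subextension determined by `T ≤ U` is catenarian: all maximal chains from
`T` to `U` have the same length. -/
def IsCatenarianFromTo {α : Type*} [PartialOrder α] (T U : α) : Prop :=
  ∀ (n m : ℕ) (c : Fin (n + 1) → α) (d : Fin (m + 1) → α),
    IsMaxChainFromTo T U n c → IsMaxChainFromTo T U m d → n = m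

/-- The extension `R ⊆ S` has FCP: every chain of `R`-subalgebras of `S` is finite. -/
def IsFCPExt (R S : Type*) [CommRing R] [CommRing S] [Algebra R S] : Prop :=
  ∀ C : Set (Subalgebra R S), IsChain (· ≤ ·) C → C.Finite

/-- The extension `R ⊆ S` is catenarian. -/
def IsCatenarianExt (R S : Type*) [CommRing R] [CommRing S] [Algebra R S] : Prop :=
  IsCatenarianFromTo (⊥ : Subalgebra R S) ⊤

/-- The length `ℓ[T,U]`: the supremum of lengths of chains from `T` to `U`. -/
noncomputable def extLength {α : Type*} [PartialOrder α] (T U : α) : ℕ :=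
  sSup {n | ∃ c : Fin (n + 1) → α, StrictMono c ∧ c 0 = T ∧ c (Fin.last n) = U}

/-- The sublattice generated by a set: the smallest set containing it and closed
under `⊔` and `⊓`. -/
inductive latticeGen {α : Type*} [Lattice α] (s : Set α) : α → Prop
  | base {x : α} : x ∈ s → latticeGen s x
  | sup {x y : α} : latticeGen s x → latticeGen s y → latticeGen s (x ⊔ y)
  | inf {x y : α} : latticeGen s x → latticeGen s y → latticeGen s (x ⊓ y)

/-- A finite lattice is supersolvable: it has a maximal chain `C` such that for every
chain `D`, the sublattice generated by `C ∪ D` is distributive. -/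
def IsSupersolvableLattice (α : Type*) [Lattice α] : Prop :=
  ∃ C : Set α, IsMaxChain (· ≤ ·) C ∧
    ∀ D : Set α, IsChain (· ≤ ·) D →
      ∀ x y z : α, latticeGen (C ∪ D) x → latticeGen (C ∪ D) y →
        latticeGen (C ∪ D) z → x ⊓ (y ⊔ z) = (x ⊓ y) ⊔ (x ⊓ z)


/-! ### Saturated chains -/

/-- `SatChain a b n`: there is a saturated chain of length `n` from `a` to `b`, i.e. a sequence of
`n` covering steps leading from `a` up to `b`. -/
inductive SatChain {α : Type*} [PartialOrder α] : α → α → ℕ → Prop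
  | refl (a : α) : SatChain a a 0
  | cons {a b c : α} {n : ℕ} : a ⋖ b → SatChain b c n → SatChain a c (n + 1)

namespace SatChain

variable {α β : Type*} [PartialOrder α] [PartialOrder β]

theorem single {a b : α} (h : a ⋖ b) : SatChain a b 1 := cons h (refl b)

theorem trans {a b c : α} {n m : ℕ} (h : SatChain a b n) (h' : SatChain b c m) :
    SatChain a c (n + m) := by
  induction h with
  | refl a => simpa using h'
  | cons hab _ ih => rw [Nat.add_right_comm]; exact cons hab (ih h')

theorem le {a b : α} {n : ℕ} (h : SatChain a b n) : a ≤ b := by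
  induction h with
  | refl a => exact le_rfl
  | cons hab _ ih => exact hab.le.trans ih

theorem map {f : α → β} (hf : ∀ a b, a ⋖ b → f a ⋖ f b) {a b : α} {n : ℕ}
    (h : SatChain a b n) : SatChain (f a) (f b) n := by
  induction h with
  | refl a => exact refl _
  | cons hab _ ih => exact cons (hf _ _ hab) ih

theorem map_anti {f : α → β} (hf : ∀ a b, a ⋖ b → f b ⋖ f a) {a b : α} {n : ℕ}
    (h : SatChain a b n) : SatChain (f b) (f a) n := by
  induction h with
  | refl a => exact refl _
  | cons hab _ ih => exact ih.trans (single (hf _ _ hab))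

theorem exists_of_le [Finite α] {a b : α} (h : a ≤ b) : ∃ n, SatChain a b n := by
  induction a using WellFoundedGT.induction with
  | ind a ih =>
    rcases h.eq_or_lt with rfl | hlt
    · exact ⟨0, refl a⟩
    · obtain ⟨c, hac, hcb⟩ := exists_covBy_le_of_lt hlt
      obtain ⟨n, hn⟩ := ih c hac.lt hcb
      exact ⟨n + 1, cons hac hn⟩

theorem of_fin {T U : α} {n : ℕ} {c : Fin (n + 1) → α} (h : IsMaxChainFromTo T U n c) :
    SatChain T U n := by
  induction n generalizing T with
  | zero =>
    obtain ⟨h0, h1, -⟩ := h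
    obtain rfl : T = U := h0.symm.trans h1
    exact refl _
  | succ n ih =>
    obtain ⟨h0, h1, h2⟩ := h
    refine cons (b := c (Fin.succ 0)) ?_ (ih (c := fun i => c i.succ) ⟨rfl, ?_, ?_⟩)
    · have := h2 0
      rwa [Fin.castSucc_zero, h0] at this
    · simpa using h1
    · intro i
      have := h2 i.succ
      rwa [← Fin.succ_castSucc] at this

theorem exists_fin {T U : α} {n : ℕ} (h : SatChain T U n) :
    ∃ c : Fin (n + 1) → α, IsMaxChainFromTo T U n c := by
  induction h with
  | refl a => exact ⟨fun _ => a, rfl, rfl, fun i => i.elim0⟩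
  | @cons a b c n hab _ ih =>
    obtain ⟨d, h0, h1, h2⟩ := ih
    refine ⟨Fin.cons a d, rfl, ?_, ?_⟩
    · rw [← Fin.succ_last, Fin.cons_succ, h1]
    · intro i
      refine Fin.cases ?_ (fun j => ?_) i
      · simpa [h0] using hab
      · rw [Fin.cons_succ, ← Fin.succ_castSucc, Fin.cons_succ]
        exact h2 j

/-- Jordan–Hölder: in a finite modular lattice the length of a saturated chain only depends on its
endpoints. -/
theorem length_unique {γ : Type*} [Lattice γ] [IsModularLattice γ] [Finite γ] {a b : γ} {n m : ℕ}
    (h : SatChain a b n) (h' : SatChain a b m) : n = m := by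
  induction n generalizing a m with
  | zero =>
    cases h
    cases h' with
    | refl => rfl
    | cons hab hbc => exact absurd hbc.le hab.lt.not_ge
  | succ n ih =>
    cases h with
    | @cons _ x _ _ hax hxb =>
    cases h' with
    | refl => exact absurd hxb.le hax.lt.not_ge
    | @cons _ y _ m hay hyb =>
    by_cases hxy : x = y
    · subst hxy
      rw [ih hxb hyb]
    · have hinf : x ⊓ y = a :=
        ((hax.eq_or_eq (le_inf hax.le hay.le) inf_le_left).resolve_right fun h =>
          hxy <| ((hay.eq_or_eq hax.le (inf_eq_left.1 h)).resolve_left hax.ne'))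
      obtain ⟨l, hl⟩ := exists_of_le (sup_le hxb.le hyb.le)
      have hx : x ⋖ x ⊔ y := covBy_sup_of_inf_covBy_right (hinf ▸ hay)
      have hy : y ⋖ x ⊔ y := covBy_sup_of_inf_covBy_left (hinf ▸ hax)
      have h1 := ih hxb (cons hx hl)
      subst h1
      rw [ih (cons hy hl) hyb]

end SatChain

theorem isCatenarianFromTo_iff {α : Type*} [PartialOrder α] {T U : α} :
    IsCatenarianFromTo T U ↔ ∀ n m, SatChain T U n → SatChain T U m → n = m := by
  constructor
  · intro h n m hn hm
    obtain ⟨c, hc⟩ := hn.exists_fin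
    obtain ⟨d, hd⟩ := hm.exists_fin
    exact h n m c d hc hd
  · intro h n m c d hc hd
    exact h n m (.of_fin hc) (.of_fin hd)

/-! ### Supersolvable lattices are catenarian -/

theorem SatChain.of_forall_mem {α : Type*} [PartialOrder α] {s : Set α} {n : ℕ}
    {c : Fin (n + 1) → α} {T U : α} (h : IsMaxChainFromTo T U n c) (hs : ∀ i, c i ∈ s) :
    SatChain (⟨T, h.1 ▸ hs 0⟩ : s) ⟨U, h.2.1 ▸ hs (Fin.last n)⟩ n := by
  refine .of_fin (c := fun i => (⟨c i, hs i⟩ : s)) ⟨?_, ?_, fun i => ?_⟩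
  · exact Subtype.ext h.1
  · exact Subtype.ext h.2.1
  · exact ⟨(h.2.2 i).lt, fun x h1 h2 => (h.2.2 i).2 (c := x) h1 h2⟩

theorem IsMaxChainFromTo.isChain_range {α : Type*} [PartialOrder α] {n : ℕ}
    {c : Fin (n + 1) → α} {T U : α} (h : IsMaxChainFromTo T U n c) :
    IsChain (· ≤ ·) (Set.range c) :=
  (Fin.monotone_iff_le_succ.2 fun i => (h.2.2 i).le).isChain_range

/-- If `C` is a maximal chain witnessing supersolvability and `d` is any saturated chain from `⊥`
to `⊤`, both `C` and `d` are saturated in the distributive sublattice they generate, so they have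
the same length by Jordan–Hölder. -/
theorem IsSupersolvableLattice.isCatenarian {α : Type*} [Lattice α] [BoundedOrder α] [Finite α]
    (h : IsSupersolvableLattice α) : IsCatenarianFromTo (⊥ : α) ⊤ := by
  obtain ⟨C, hC, hdist⟩ := h
  have hbot : (⊥ : α) ∈ C := hC.bot_mem
  have htop : (⊤ : α) ∈ C := hC.top_mem
  obtain ⟨r, hr⟩ := SatChain.exists_of_le (α := C) (a := ⟨⊥, hbot⟩) (b := ⟨⊤, htop⟩) bot_le
  -- covering pairs of the maximal chain `C` are covering pairs of the whole lattice
  have hcov : ∀ a b : C, a ⋖ b → (a : α) ⋖ b := by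
    intro a b hab
    refine ⟨hab.lt, fun x h1 h2 => ?_⟩
    have hx : x ∈ C := by
      have hins : IsChain (· ≤ ·) (insert x C) := by
        refine hC.1.insert fun y hy _ => ?_
        rcases hC.1.total hy a.2 with hya | hay
        · exact Or.inr (hya.trans h1.le)
        · by_cases hyb : y < b
          · rcases hay.eq_or_lt with rfl | hlt
            · exact Or.inr h1.le
            · exact absurd hyb (hab.2 (c := ⟨y, hy⟩) hlt)
          · rcases hC.1.total hy b.2 with h3 | h3
            · rcases h3.eq_or_lt with rfl | h3
              · exact Or.inl h2.le
              · exact absurd h3 hyb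
            · exact Or.inl (h2.le.trans h3)
      rw [hC.2 hins (Set.subset_insert _ _)]
      exact Set.mem_insert _ _
    exact hab.2 (c := ⟨x, hx⟩) h1 h2
  have key : ∀ (n : ℕ) (d : Fin (n + 1) → α), IsMaxChainFromTo ⊥ ⊤ n d → n = r := by
    intro n d hd
    let K : Sublattice α :=
      { carrier := {x | latticeGen (C ∪ Set.range d) x}
        supClosed' := fun _ hx _ hy => latticeGen.sup hx hy
        infClosed' := fun _ hx _ hy => latticeGen.inf hx hy }
    have hK := hdist _ hd.isChain_range
    have : IsModularLattice K := ⟨fun {x} y {z} hxz => by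
      have := hK z x y z.2 x.2 y.2
      have hzx : (z : α) ⊓ x = x := inf_eq_right.2 hxz
      rw [hzx] at this
      change ((x : α) ⊔ y) ⊓ z ≤ (x : α) ⊔ ((y : α) ⊓ z)
      rw [inf_comm, this, inf_comm (y : α)]⟩
    have hCK : ∀ x : C, (x : α) ∈ K := fun x => latticeGen.base (Or.inl x.2)
    have hdK : ∀ i, d i ∈ (K : Set α) := fun i => latticeGen.base (Or.inr ⟨i, rfl⟩)
    have h1 := SatChain.of_forall_mem hd hdK
    have h2 := hr.map (f := fun x : C => (⟨x, hCK x⟩ : K)) fun a b hab =>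
      ⟨hab.lt, fun x h1 h2 => (hcov a b hab).2 (c := x) h1 h2⟩
    exact SatChain.length_unique (γ := K) h1 h2
  intro n m c d hc hd
  rw [key n c hc, key m d hd]

/-! ### Chains of normal subgroups generate distributive sublattices -/

section Staircase

variable {α : Type*} [Lattice α]

/-- The join `(c 0 ⊓ f 0) ⊔ ⋯ ⊔ (c r ⊓ f r)`. -/
def stairSup (c f : ℕ → α) : ℕ → α
  | 0 => c 0 ⊓ f 0
  | r + 1 => stairSup c f r ⊔ (c (r + 1) ⊓ f (r + 1))

/-- The meet `f 0 ⊓ (c 0 ⊔ f 1) ⊓ ⋯ ⊓ (c (r - 1) ⊔ f r)`. -/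
def stairInf (c f : ℕ → α) : ℕ → α
  | 0 => f 0
  | r + 1 => stairInf c f r ⊓ (c r ⊔ f (r + 1))

theorem inf_sup_of_total {x y : α} (a : α) (h : x ≤ y ∨ y ≤ x) :
    a ⊓ (x ⊔ y) = (a ⊓ x) ⊔ (a ⊓ y) := by
  rcases h with h | h
  · rw [sup_eq_right.2 h, sup_eq_right.2 (inf_le_inf_left a h)]
  · rw [sup_eq_left.2 h, sup_eq_left.2 (inf_le_inf_left a h)]

theorem sup_inf_of_total {x y : α} (a : α) (h : x ≤ y ∨ y ≤ x) :
    a ⊔ (x ⊓ y) = (a ⊔ x) ⊓ (a ⊔ y) :=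
  inf_sup_of_total (α := αᵒᵈ) a h.symm

theorem stairSup_sup (c f g : ℕ → α) (h : ∀ i, f i ≤ g i ∨ g i ≤ f i) (r : ℕ) :
    stairSup c (f ⊔ g) r = stairSup c f r ⊔ stairSup c g r := by
  induction r with
  | zero => exact inf_sup_of_total _ (h 0)
  | succ r ih =>
    simp only [stairSup, ih, Pi.sup_apply]
    rw [inf_sup_of_total _ (h (r + 1))]
    ac_rfl

theorem stairInf_inf (c f g : ℕ → α) (h : ∀ i, f i ≤ g i ∨ g i ≤ f i) (r : ℕ) :
    stairInf c (f ⊓ g) r = stairInf c f r ⊓ stairInf c g r := by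
  induction r with
  | zero => rfl
  | succ r ih =>
    simp only [stairInf, ih, Pi.inf_apply]
    rw [sup_inf_of_total _ (h (r + 1))]
    ac_rfl

theorem le_stairInf (c f : ℕ → α) {r : ℕ} {d : α} (h : ∀ i ≤ r, d ≤ f i) :
    d ≤ stairInf c f r := by
  induction r with
  | zero => exact h 0 le_rfl
  | succ r ih =>
    exact le_inf (ih fun i hi => h i (hi.trans (Nat.le_succ r))) (le_sup_of_le_right (h _ le_rfl))

theorem stairSup_le (c f : ℕ → α) {r : ℕ} {d : α} (h : ∀ i ≤ r, c i ⊓ f i ≤ d) :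
    stairSup c f r ≤ d := by
  induction r with
  | zero => exact h 0 le_rfl
  | succ r ih =>
    exact sup_le (ih fun i hi => h i (hi.trans (Nat.le_succ r))) (h _ le_rfl)

theorem le_stairSup (c f : ℕ → α) {r i : ℕ} (h : i ≤ r) : c i ⊓ f i ≤ stairSup c f r := by
  induction r with
  | zero => rw [Nat.le_zero.1 h]; exact le_rfl
  | succ r ih =>
    rcases h.eq_or_lt with rfl | h
    · exact le_sup_right
    · exact le_sup_of_le_left (ih (Nat.lt_succ_iff.1 h))

end Staircase

section GroupStaircase

variable {G : Type*} [Group G]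

/-- Dedekind's modular law for subgroups `E` and `D` with `D` normalizing `E`. -/
theorem dedekind_of_le_normalizer {E D C : Subgroup G} (hD : D ≤ Subgroup.normalizer (E : Set G))
    (hE : E ≤ C) : (E ⊔ D) ⊓ C = E ⊔ (D ⊓ C) := by
  apply SetLike.coe_injective
  rw [Subgroup.coe_inf, Subgroup.coe_mul_of_right_le_normalizer_left _ _ hD,
    Subgroup.coe_mul_of_right_le_normalizer_left _ _ (inf_le_left.trans hD),
    Subgroup.mul_inf_assoc _ _ _ hE]

theorem dedekind_of_normal {N D B : Subgroup G} (hN : N.Normal) (hD : D ≤ B) :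
    B ⊓ (N ⊔ D) = (B ⊓ N) ⊔ D := by
  have : N ⊔ D = D ⊔ N := sup_comm _ _
  have h2 : (B ⊓ N) ⊔ D = D ⊔ (N ⊓ B) := by rw [sup_comm, inf_comm]
  have h3 : D ≤ Subgroup.normalizer ((N ⊓ B : Subgroup G) : Set G) :=
    (le_inf Subgroup.le_normalizer_of_normal (hD.trans Subgroup.le_normalizer)).trans
      Subgroup.inf_normalizer_le_normalizer_inf
  apply SetLike.coe_injective
  rw [inf_comm, this, h2, Subgroup.coe_inf, Subgroup.mul_normal,
    Subgroup.coe_mul_of_left_le_normalizer_right _ _ h3, Subgroup.mul_inf_assoc _ _ _ hD]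

theorem le_normalizer_stairSup {c f : ℕ → Subgroup G} (hc : ∀ i, (c i).Normal) {r : ℕ}
    {d : Subgroup G} (h : ∀ i ≤ r, d ≤ f i) :
    d ≤ Subgroup.normalizer ((stairSup c f r : Subgroup G) : Set G) := by
  have step : ∀ i ≤ r, d ≤ Subgroup.normalizer ((c i ⊓ f i : Subgroup G) : Set G) := fun i hi =>
    have := hc i
    (le_inf Subgroup.le_normalizer_of_normal ((h i hi).trans Subgroup.le_normalizer)).trans
      Subgroup.inf_normalizer_le_normalizer_inf
  induction r with
  | zero => exact step 0 le_rfl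
  | succ r ih =>
    exact (le_inf (ih (fun i hi => h i (hi.trans (Nat.le_succ r)))
      fun i hi => step i (hi.trans (Nat.le_succ r))) (step _ le_rfl)).trans
      (Subgroup.normalizer_inf_normalizer_le_normalizer_sup _ _)

/-- The identity exchanging a join of meets with a meet of joins. For the inductive step, `f (r + 1)`
normalizes each `c i ⊓ f i` with `i ≤ r`, so Dedekind's law applies to their join. -/
theorem stairSup_eq {c f : ℕ → Subgroup G} (hn : ∀ i, (c i).Normal) (hc : Monotone c)
    (hf : Antitone f) (r : ℕ) : stairSup c f r = stairInf c f r ⊓ c r := by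
  induction r with
  | zero => exact inf_comm _ _
  | succ r ih =>
    have h1 : stairInf c f r ⊓ (c r ⊔ f (r + 1)) = stairSup c f r ⊔ f (r + 1) := by
      rw [dedekind_of_normal (hn r) (le_stairInf c f fun i hi => hf (hi.trans (Nat.le_succ r))), ih]
    have h2 : f (r + 1) ≤ Subgroup.normalizer ((stairSup c f r : Subgroup G) : Set G) :=
      le_normalizer_stairSup hn fun i hi => hf (hi.trans (Nat.le_succ r))
    have h3 : stairSup c f r ≤ c (r + 1) :=
      stairSup_le c f fun i hi => inf_le_left.trans (hc (hi.trans (Nat.le_succ r)))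
    simp only [stairSup, stairInf]
    rw [h1, dedekind_of_le_normalizer h2 h3, inf_comm (c (r + 1))]

/-- Every element of the sublattice generated by a chain `c` of normal subgroups ending in `⊤` and
an arbitrary chain `D` is of the form `⨆ i, c i ⊓ f i` with `f` antitone with values in
`D ∪ {⊥, ⊤}`. -/
theorem exists_stairSup_of_latticeGen {c : ℕ → Subgroup G} (hn : ∀ i, (c i).Normal)
    (hc : Monotone c) {m : ℕ} (hm : c m = ⊤) {D : Set (Subgroup G)}
    (hD : IsChain (· ≤ ·) D) {x : Subgroup G} (hx : latticeGen (Set.range c ∪ D) x) :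
    ∃ f : ℕ → Subgroup G, Antitone f ∧ (∀ i, f i ∈ insert ⊥ (insert ⊤ D)) ∧
      x = stairSup c f m := by
  have hD' : IsChain (· ≤ ·) (insert ⊥ (insert ⊤ D)) :=
    (hD.insert fun _ _ _ => Or.inr le_top).insert fun _ _ _ => Or.inl bot_le
  induction hx with
  | base h =>
    rcases h with ⟨j, rfl⟩ | h
    · refine ⟨fun i => if i ≤ j then ⊤ else ⊥, ?_, ?_, ?_⟩
      · intro a b hab
        by_cases hb : b ≤ j
        · simp [hb, hab.trans hb]
        · simp [hb]
      · intro i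
        dsimp only
        split_ifs <;> simp
      · apply le_antisymm
        · rcases le_total j m with hj | hj
          · refine le_trans ?_ (le_stairSup c _ hj)
            simp
          · refine le_trans ?_ (le_stairSup c _ le_rfl)
            simp [hm, hj]
        · refine stairSup_le c _ fun i _ => ?_
          by_cases hi : i ≤ j
          · simpa [hi] using hc hi
          · simp [hi]
    · refine ⟨fun _ => _, antitone_const, fun _ => Or.inr (Or.inr h), le_antisymm ?_ ?_⟩
      · refine le_trans ?_ (le_stairSup c _ le_rfl)
        simp [hm]
      · exact stairSup_le c _ fun i _ => inf_le_right
  | sup _ _ ih1 ih2 =>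
    obtain ⟨f, hf, hfD, rfl⟩ := ih1
    obtain ⟨g, hg, hgD, rfl⟩ := ih2
    refine ⟨f ⊔ g, hf.sup hg, fun i => ?_,
      (stairSup_sup c f g (fun i => hD'.total (hfD i) (hgD i)) m).symm⟩
    rcases hD'.total (hfD i) (hgD i) with h | h
    · simpa only [Pi.sup_apply, sup_eq_right.2 h] using hgD i
    · simpa only [Pi.sup_apply, sup_eq_left.2 h] using hfD i
  | inf _ _ ih1 ih2 =>
    obtain ⟨f, hf, hfD, rfl⟩ := ih1
    obtain ⟨g, hg, hgD, rfl⟩ := ih2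
    refine ⟨f ⊓ g, hf.inf hg, fun i => ?_, ?_⟩
    · rcases hD'.total (hfD i) (hgD i) with h | h
      · simpa only [Pi.inf_apply, inf_eq_left.2 h] using hfD i
      · simpa only [Pi.inf_apply, inf_eq_right.2 h] using hgD i
    · rw [stairSup_eq hn hc hf, stairSup_eq hn hc hg, stairSup_eq hn hc (hf.inf hg), hm,
        stairInf_inf c f g (fun i => hD'.total (hfD i) (hgD i))]
      simp

/-- The parametrization `f ↦ ⨆ i, c i ⊓ f i` is a lattice homomorphism on antitone functions with
values in a chain, so distributivity is inherited from the chain. -/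
theorem distrib_of_normal_chain {c : ℕ → Subgroup G} (hn : ∀ i, (c i).Normal)
    (hc : Monotone c) {m : ℕ} (hm : c m = ⊤) {D : Set (Subgroup G)}
    (hD : IsChain (· ≤ ·) D) {x y z : Subgroup G} (hx : latticeGen (Set.range c ∪ D) x)
    (hy : latticeGen (Set.range c ∪ D) y) (hz : latticeGen (Set.range c ∪ D) z) :
    x ⊓ (y ⊔ z) = (x ⊓ y) ⊔ (x ⊓ z) := by
  have hD' : IsChain (· ≤ ·) (insert ⊥ (insert ⊤ D)) :=
    (hD.insert fun _ _ _ => Or.inr le_top).insert fun _ _ _ => Or.inl bot_le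
  obtain ⟨f, hf, hfD, rfl⟩ := exists_stairSup_of_latticeGen hn hc hm hD hx
  obtain ⟨g, hg, hgD, rfl⟩ := exists_stairSup_of_latticeGen hn hc hm hD hy
  obtain ⟨h, hh, hhD, rfl⟩ := exists_stairSup_of_latticeGen hn hc hm hD hz
  have hinf : ∀ {u v : ℕ → Subgroup G}, Antitone u → Antitone v → (∀ i, u i ≤ v i ∨ v i ≤ u i) →
      stairSup c u m ⊓ stairSup c v m = stairSup c (u ⊓ v) m := by
    intro u v hu hv huv
    rw [stairSup_eq hn hc hu, stairSup_eq hn hc hv, stairSup_eq hn hc (hu.inf hv), hm,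
      stairInf_inf c u v huv]
    simp
  have t1 : ∀ i, f i ≤ g i ∨ g i ≤ f i := fun i => hD'.total (hfD i) (hgD i)
  have t2 : ∀ i, f i ≤ h i ∨ h i ≤ f i := fun i => hD'.total (hfD i) (hhD i)
  have t3 : ∀ i, g i ≤ h i ∨ h i ≤ g i := fun i => hD'.total (hgD i) (hhD i)
  have t4 : ∀ i, f i ≤ (g ⊔ h) i ∨ (g ⊔ h) i ≤ f i := fun i => by
    rcases t3 i with h' | h'
    · simpa only [Pi.sup_apply, sup_eq_right.2 h'] using t2 i
    · simpa only [Pi.sup_apply, sup_eq_left.2 h'] using t1 i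
  have t5 : ∀ i, (f ⊓ g) i ≤ (f ⊓ h) i ∨ (f ⊓ h) i ≤ (f ⊓ g) i := fun i =>
    (t3 i).imp (inf_le_inf_left _) (inf_le_inf_left _)
  rw [← stairSup_sup c g h t3, hinf hf (hg.sup hh) t4, hinf hf hg t1, hinf hf hh t2,
    ← stairSup_sup c _ _ t5]
  congr 1
  funext i
  exact inf_sup_of_total _ (t3 i)

end GroupStaircase

/-! ### Groups in which covering subgroups have prime index -/

/-- Every covering pair of subgroups `H ⋖ K` has prime index `[K : H]`. -/
def PrimeCovers (G : Type*) [Group G] : Prop :=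
  ∀ H K : Subgroup G, H ⋖ K → (H.relIndex K).Prime

section Transport

variable {G G' : Type*} [Group G] [Group G']

theorem covBy_map_of_injective {f : G →* G'} (hf : Function.Injective f) (H K : Subgroup G)
    (h : H ⋖ K) : H.map f ⋖ K.map f := by
  refine ⟨(Subgroup.map_lt_map_iff_of_injective hf).2 h.lt, fun x h1 h2 => ?_⟩
  have hx : (x.comap f).map f = x := by
    rw [Subgroup.map_comap_eq, inf_eq_right]
    exact h2.le.trans (Subgroup.map_le_range f K)
  rw [← hx] at h1 h2
  exact h.2 ((Subgroup.map_lt_map_iff_of_injective hf).1 h1)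
    ((Subgroup.map_lt_map_iff_of_injective hf).1 h2)

theorem covBy_comap_of_surjective {f : G →* G'} (hf : Function.Surjective f) (H K : Subgroup G')
    (h : H ⋖ K) : H.comap f ⋖ K.comap f := by
  refine ⟨(Subgroup.comap_lt_comap_of_surjective hf).2 h.lt, fun x h1 h2 => ?_⟩
  have hx : (x.map f).comap f = x := by
    rw [Subgroup.comap_map_eq, sup_eq_left]
    exact (Subgroup.ker_le_comap f H).trans h1.le
  rw [← hx] at h1 h2
  exact h.2 ((Subgroup.comap_lt_comap_of_surjective hf).1 h1)
    ((Subgroup.comap_lt_comap_of_surjective hf).1 h2)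

theorem relIndex_comap_comap {f : G →* G'} (hf : Function.Surjective f) (H K : Subgroup G') :
    (H.comap f).relIndex (K.comap f) = H.relIndex K := by
  rw [Subgroup.relIndex_comap, Subgroup.map_comap_eq_self_of_surjective hf]

theorem PrimeCovers.of_injective (h : PrimeCovers G') {f : G →* G'} (hf : Function.Injective f) :
    PrimeCovers G := fun H K hHK => by
  rw [← Subgroup.relIndex_map_map_of_injective H K hf]
  exact h _ _ (covBy_map_of_injective hf H K hHK)

theorem PrimeCovers.of_surjective (h : PrimeCovers G) {f : G →* G'} (hf : Function.Surjective f) :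
    PrimeCovers G' := fun H K hHK => by
  rw [← relIndex_comap_comap hf H K]
  exact h _ _ (covBy_comap_of_surjective hf H K hHK)

end Transport

/-- If a subgroup `M` contains the normalizer of a Sylow `p`-subgroup, then `[G : M] ≡ 1 mod p`. -/
theorem index_modEq_one_of_normalizer_le {G : Type*} [Group G] [Finite G] {p : ℕ} [Fact p.Prime]
    (P : Sylow p G) {M : Subgroup G} (hM : Subgroup.normalizer (P : Set G) ≤ M) :
    M.index ≡ 1 [MOD p] := by
  have hPM : (P : Subgroup G) ≤ M := Subgroup.le_normalizer.trans hM
  have h1 : (Subgroup.normalizer (P : Set G)).index ≡ 1 [MOD p] := by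
    rw [← P.card_eq_index_normalizer]
    exact card_sylow_modEq_one p G
  have h2 : (Subgroup.normalizer (P : Set G)).relIndex M ≡ 1 [MOD p] := by
    have := card_sylow_modEq_one p M
    rw [(P.subtype hPM).card_eq_index_normalizer] at this
    have h3 : Subgroup.normalizer ((P.subtype hPM : Sylow p M) : Set M) =
        (Subgroup.normalizer (P : Set G)).subgroupOf M :=
      (Subgroup.subgroupOf_normalizer_eq hPM).symm
    rwa [h3] at this
  rw [← Subgroup.relIndex_mul_index hM] at h1
  calc M.index = 1 * M.index := (one_mul _).symm
    _ ≡ _ [MOD p] := (h2.symm.mul_right _)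
    _ ≡ 1 [MOD p] := h1

/-- The Sylow subgroup for the largest prime divisor of `|G|` is normal: otherwise a maximal subgroup
above its normalizer has index a prime congruent to `1` modulo the largest prime. -/
theorem PrimeCovers.sylow_normal {G : Type*} [Group G] [Finite G] (h : PrimeCovers G) {p : ℕ}
    [Fact p.Prime] (hp : ∀ q, q.Prime → q ∣ Nat.card G → q ≤ p) (P : Sylow p G) :
    (P : Subgroup G).Normal := by
  rw [← Subgroup.normalizer_eq_top_iff]
  by_contra hne
  obtain ⟨M, hM, hle⟩ := (eq_top_or_exists_le_coatom _).resolve_left hne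
  have hq := h M ⊤ hM.covBy_top
  rw [Subgroup.relIndex_top_right] at hq
  have h1 := index_modEq_one_of_normalizer_le P hle
  have h2 : M.index ≤ p := hp _ hq M.index_dvd_card
  have hpp : p.Prime := Fact.out
  rcases h2.eq_or_lt with h2 | h2
  · rw [h2] at h1
    have h4 : p ∣ 1 := (Nat.modEq_zero_iff_dvd).1 (h1.symm.trans (by simp [Nat.ModEq]))
    exact hpp.one_lt.ne' (Nat.dvd_one.1 h4)
  · have := Nat.ModEq.eq_of_lt_of_lt h1 h2 hpp.one_lt
    exact hq.one_lt.ne' this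

theorem exists_largest_prime {n : ℕ} (hn : 1 < n) :
    ∃ p, p.Prime ∧ p ∣ n ∧ ∀ q, q.Prime → q ∣ n → q ≤ p := by
  have hne : n.primeFactors.Nonempty := Nat.nonempty_primeFactors.2 hn
  refine ⟨n.primeFactors.max' hne, ?_, ?_, ?_⟩
  · exact Nat.prime_of_mem_primeFactors (Finset.max'_mem _ hne)
  · exact Nat.dvd_of_mem_primeFactors (Finset.max'_mem _ hne)
  · intro q hq hqn
    exact Finset.le_max' _ _ (Nat.mem_primeFactors.2 ⟨hq, hqn, by omega⟩)

/-- `G` has a normal `q`-complement: a normal subgroup of order prime to `q` whose index is a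
power of `q`. -/
def HasNormalComplement (q : ℕ) (G : Type*) [Group G] : Prop :=
  ∃ K : Subgroup G, K.Normal ∧ (Nat.card K).Coprime q ∧ ∃ n, K.index = q ^ n

/-- For the smallest prime `q` there is a normal `q`-complement: quotienting by the normal Sylow
subgroups for the larger primes one after another leaves a `q`-group. -/
theorem PrimeCovers.hasNormalComplement {q : ℕ} (hq : q.Prime) :
    ∀ (N : ℕ) (G : Type*) [Group G] [Finite G], Nat.card G = N → PrimeCovers G →
      (∀ p, p.Prime → p ∣ Nat.card G → q ≤ p) → HasNormalComplement q G := by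
  intro N
  induction N using Nat.strong_induction_on with
  | _ N ih =>
  intro G _ _ hN h hmin
  rcases (Nat.card_pos (α := G)).nat_succ_le.eq_or_lt with h1 | h1
  · exact ⟨⊥, inferInstance, by simp, 0, by simpa using h1.symm⟩
  obtain ⟨p, hp, hpG, hmax⟩ := exists_largest_prime h1
  have : Fact p.Prime := ⟨hp⟩
  obtain ⟨P⟩ : Nonempty (Sylow p G) := inferInstance
  rcases (hmin p hp hpG).eq_or_lt with rfl | hlt
  · refine ⟨⊥, inferInstance, by simp, (Nat.card G).primeFactorsList.length, ?_⟩
    rw [Subgroup.index_bot]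
    exact Nat.eq_prime_pow_of_unique_prime_dvd (by omega) fun {d} hd hdG =>
      le_antisymm (hmax d hd hdG) (hmin d hd hdG)
  · have hPn := h.sylow_normal hmax P
    have hcard := (P : Subgroup G).card_mul_index
    have hP1 : 1 < Nat.card P := by
      have := P.dvd_card_of_dvd_card hpG
      exact lt_of_lt_of_le hp.one_lt (Nat.le_of_dvd Nat.card_pos this)
    have hlt' : Nat.card (G ⧸ (P : Subgroup G)) < N := by
      rw [← Subgroup.index_eq_card, ← hN, ← hcard]
      exact lt_mul_left (Nat.pos_of_ne_zero Subgroup.index_ne_zero_of_finite) hP1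
    obtain ⟨K, hK, hKq, n, hn⟩ := ih _ hlt' (G ⧸ (P : Subgroup G)) rfl
      (h.of_surjective (QuotientGroup.mk'_surjective _)) fun r hr hrd =>
        hmin r hr (hrd.trans (by rw [← Subgroup.index_eq_card]; exact Subgroup.index_dvd_card _))
    refine ⟨K.comap (QuotientGroup.mk' _), hK.comap _, ?_, n, ?_⟩
    · have e : Nat.card (K.comap (QuotientGroup.mk' (P : Subgroup G))) =
          Nat.card P * Nat.card K := by
        have h2 := Subgroup.relIndex_mul_relIndex ⊥ (P : Subgroup G)
          (K.comap (QuotientGroup.mk' (P : Subgroup G))) bot_le (QuotientGroup.le_comap_mk' _ _)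
        have h3 := relIndex_comap_comap (QuotientGroup.mk'_surjective (P : Subgroup G)) ⊥ K
        rw [MonoidHom.comap_bot, QuotientGroup.ker_mk', Subgroup.relIndex_bot_left] at h3
        rw [h3, Subgroup.relIndex_bot_left, Subgroup.relIndex_bot_left] at h2
        exact h2.symm
      rw [e]
      refine Nat.Coprime.mul_left ?_ hKq
      obtain ⟨k, hk⟩ := P.2.exists_card_eq
      rw [hk]
      exact Nat.Coprime.pow_left _ ((Nat.coprime_primes hp hq).2 hlt.ne')
    · rw [Subgroup.index_comap_of_surjective _ (QuotientGroup.mk'_surjective _), hn]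

/-! ### Supersolvability of groups with prime covers -/

/-- `NormalChain N`: the normal subgroup `N` is the bottom of a saturated chain (in the full
subgroup lattice) of normal subgroups of `G` reaching `⊤`. -/
inductive NormalChain {G : Type*} [Group G] : Subgroup G → Prop
  | top : NormalChain ⊤
  | step {N M : Subgroup G} : N.Normal → N ⋖ M → NormalChain M → NormalChain N

theorem NormalChain.comap {G G' : Type*} [Group G] [Group G'] {f : G →* G'}
    (hf : Function.Surjective f) {N : Subgroup G'} (h : NormalChain N) :
    NormalChain (N.comap f) := by
  induction h with
  | top => rw [Subgroup.comap_top]; exact .top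
  | step hN hNM _ ih => exact .step (hN.comap f) (covBy_comap_of_surjective hf _ _ hNM) ih

/-- The chain as a sequence indexed by `ℕ` which is eventually constant equal to `⊤`. -/
theorem NormalChain.exists_seq {G : Type*} [Group G] {N : Subgroup G} (h : NormalChain N) :
    ∃ c : ℕ → Subgroup G, c 0 = N ∧ (∀ i, (c i).Normal) ∧ (∀ i, c i ⩿ c (i + 1)) ∧
      ∃ m, c m = ⊤ := by
  induction h with
  | top => exact ⟨fun _ => ⊤, rfl, fun _ => inferInstance, fun _ => WCovBy.refl _, 0, rfl⟩
  | @step N M hN hNM _ ih =>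
    obtain ⟨c, h0, hn, hc, m, hm⟩ := ih
    refine ⟨fun i => Nat.casesOn i N c, rfl, ?_, ?_, m + 1, hm⟩
    · rintro (_ | i)
      · exact hN
      · exact hn i
    · rintro (_ | i)
      · simpa [h0] using hNM.wcovBy
      · exact hc i

/-- Let `P` be the normal Sylow subgroup for the largest prime, `H` a complement of `P`, and `N` a
minimal normal subgroup of `G` inside the center of `P`. Subgroups between `H` and `N ⊔ H` meet `N`
in normal subgroups of `G`, so `H ⋖ N ⊔ H` and `|N| = [N ⊔ H : H]` is prime, whence
`⊥ ⋖ N`. -/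
theorem PrimeCovers.exists_normal_atom {G : Type*} [Group G] [Finite G] (h : PrimeCovers G)
    (hG : 1 < Nat.card G) : ∃ N : Subgroup G, N.Normal ∧ ⊥ ⋖ N := by
  obtain ⟨p, hp, hpG, hmax⟩ := exists_largest_prime hG
  have : Fact p.Prime := ⟨hp⟩
  obtain ⟨P⟩ : Nonempty (Sylow p G) := inferInstance
  have hPn : (P : Subgroup G).Normal := h.sylow_normal hmax P
  have hP1 : 1 < Nat.card P :=
    lt_of_lt_of_le hp.one_lt (Nat.le_of_dvd Nat.card_pos (P.dvd_card_of_dvd_card hpG))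
  have : Nontrivial P := Finite.one_lt_card_iff_nontrivial.1 hP1
  have hZ := P.2.center_nontrivial
  let Z : Subgroup G := (Subgroup.center P).map (P : Subgroup G).subtype
  have hZn : Z.Normal := ConjAct.normal_of_characteristic_of_normal
  have hZb : Z ≠ ⊥ := fun hb => by
    have := (Subgroup.map_eq_bot_iff_of_injective _ (P : Subgroup G).subtype_injective).1 hb
    rw [this] at hZ
    exact not_nontrivial _ hZ
  obtain ⟨N, ⟨hN, hNb, hNZ⟩, hmin⟩ :=
    (Set.toFinite {N : Subgroup G | N.Normal ∧ N ≠ ⊥ ∧ N ≤ Z}).exists_minimal ⟨Z, hZn, hZb, le_rfl⟩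
  obtain ⟨H, hH⟩ := Subgroup.exists_right_complement'_of_coprime P.card_coprime_index
  have hNP : N ≤ P := hNZ.trans (Subgroup.map_subtype_le _)
  have hNH : N ⊓ H = ⊥ := by
    rw [eq_bot_iff, ← hH.disjoint.eq_bot]
    exact inf_le_inf_right _ hNP
  have hcov : H ⋖ N ⊔ H := by
    refine covBy_of_eq_or_eq (lt_of_le_of_ne le_sup_right fun he => hNb ?_) fun K hHK hK => ?_
    · rw [← hNH, eq_comm, inf_eq_left, he]
      exact le_sup_left
    · have hnorm : (K ⊓ N).Normal := by
        rw [← Subgroup.normalizer_eq_top_iff, eq_top_iff, ← hH.sup_eq_top]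
        refine sup_le ?_ ?_
        · rw [Subgroup.le_normalizer_iff]
          intro x hx y hy
          obtain ⟨z, hz, rfl⟩ := hNZ hy.2
          have := Subgroup.mem_center_iff.1 hz ⟨x, hx⟩
          have e : x * (P : Subgroup G).subtype z * x⁻¹ = (P : Subgroup G).subtype z := by
            rw [mul_inv_eq_iff_eq_mul]
            exact congrArg Subtype.val this
          rw [e]
          exact hy
        · exact hHK.trans ((le_inf Subgroup.le_normalizer Subgroup.le_normalizer_of_normal).trans
            Subgroup.inf_normalizer_le_normalizer_inf)
      have hded : K = (K ⊓ N) ⊔ H := by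
        rw [← dedekind_of_normal hN hHK, inf_eq_left.2 hK]
      by_cases hb : K ⊓ N = ⊥
      · left
        rw [hb, bot_sup_eq] at hded
        exact hded
      · right
        have : N ≤ K ⊓ N := hmin ⟨hnorm, hb, inf_le_right.trans hNZ⟩ inf_le_right
        exact le_antisymm hK (sup_le (this.trans inf_le_left) hHK)
  have hprime := h _ _ hcov
  have hcard : H.relIndex (N ⊔ H) = Nat.card N := by
    have h1 := Subgroup.relIndex_mul_relIndex ⊥ H (N ⊔ H) bot_le le_sup_right
    have h2 := Subgroup.relIndex_mul_relIndex ⊥ N (N ⊔ H) bot_le le_sup_left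
    rw [Subgroup.relIndex_sup_left, ← Subgroup.inf_relIndex_right N H, hNH] at h2
    rw [← h2] at h1
    simp only [Subgroup.relIndex_bot_left] at h1
    rw [mul_comm] at h1
    exact Nat.eq_of_mul_eq_mul_right Nat.card_pos h1
  rw [hcard] at hprime
  refine ⟨N, hN, covBy_of_eq_or_eq (bot_lt_iff_ne_bot.2 hNb) fun K _ hK => ?_⟩
  rcases (Nat.dvd_prime hprime).1 (Subgroup.card_dvd_of_le hK) with h1 | h1
  · exact Or.inl (Subgroup.card_eq_one.1 h1)
  · exact Or.inr (Subgroup.eq_of_le_of_card_ge hK h1.ge)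

/-- Huppert's theorem, in the hereditary form used here: groups with prime covers are
supersolvable. -/
theorem PrimeCovers.normalChain : ∀ (n : ℕ) (G : Type*) [Group G] [Finite G], Nat.card G = n →
    PrimeCovers G → NormalChain (⊥ : Subgroup G) := by
  intro n
  induction n using Nat.strong_induction_on with
  | _ n ih =>
  intro G _ _ hn h
  rcases (Nat.card_pos (α := G)).nat_succ_le.eq_or_lt with h1 | h1
  · have : (⊥ : Subgroup G) = ⊤ := by
      rw [← Subgroup.card_eq_iff_eq_top, Subgroup.card_bot, ← h1]
    rw [this]
    exact .top
  · obtain ⟨N, hN, hcov⟩ := h.exists_normal_atom h1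
    refine .step inferInstance hcov ?_
    have hN1 : 1 < Nat.card N := N.one_lt_card_iff_ne_bot.2 hcov.lt.ne'
    have hlt : Nat.card (G ⧸ N) < n := by
      rw [← Subgroup.index_eq_card, ← hn, ← N.card_mul_index]
      exact lt_mul_left (Nat.pos_of_ne_zero Subgroup.index_ne_zero_of_finite) hN1
    have := (ih _ hlt (G ⧸ N) rfl (h.of_surjective (QuotientGroup.mk'_surjective N))).comap
      (QuotientGroup.mk'_surjective N)
    rwa [MonoidHom.comap_bot, QuotientGroup.ker_mk'] at this

theorem NormalChain.isSupersolvableLattice {G : Type*} [Group G]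
    (h : NormalChain (⊥ : Subgroup G)) : IsSupersolvableLattice (Subgroup G) := by
  obtain ⟨c, h0, hn, hc, m, hm⟩ := h.exists_seq
  have hmono : Monotone c := monotone_nat_of_le_succ fun i => (hc i).le
  refine ⟨Set.range c, ⟨hmono.isChain_range, fun s hs hcs => hcs.antisymm fun H hH => ?_⟩,
    fun D hD x y z => distrib_of_normal_chain hn hmono hm hD⟩
  classical
  -- a subgroup `H` comparable with all `c i` lies between two consecutive terms
  have hex : ∃ i, H ≤ c i := ⟨m, hm ▸ le_top⟩
  rcases Nat.eq_zero_or_pos (Nat.find hex) with hz | hz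
  · refine ⟨0, ?_⟩
    have := Nat.find_spec hex
    rw [hz, h0] at this
    rw [h0, le_bot_iff.1 this]
  · obtain ⟨j, hj⟩ := Nat.exists_eq_succ_of_ne_zero hz.ne'
    have h1 : H ≤ c (j + 1) := by
      have := Nat.find_spec hex
      rwa [hj] at this
    have h2 : ¬ H ≤ c j := Nat.find_min hex (by omega)
    have h3 : c j ≤ H := (hs.total (hcs ⟨j, rfl⟩) hH).resolve_right h2
    rcases (hc j).eq_or_eq h3 h1 with h4 | h4
    · exact ⟨j, h4.symm⟩
    · exact ⟨j + 1, h4.symm⟩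

/-! ### Fusion in groups whose local subgroups have normal complements -/

/-- A normal `q`-complement `K` centralizes every normal `q`-subgroup `D` (both are normal and they
intersect trivially), and `N = K S` for every Sylow `q`-subgroup `S`. -/
theorem HasNormalComplement.exists_mul {q : ℕ} [Fact q.Prime] {N : Type*} [Group N] [Finite N]
    (h : HasNormalComplement q N) {D : Subgroup N} (hD : D.Normal) (hDq : IsPGroup q D)
    (S : Sylow q N) (n : N) : ∃ k ∈ Subgroup.centralizer (D : Set N), ∃ s ∈ S, k * s = n := by
  obtain ⟨K, hK, hcop, m, hm⟩ := h
  have htop : K ⊔ (S : Subgroup N) = ⊤ := by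
    rw [← Subgroup.index_eq_one]
    have h1 : (K ⊔ (S : Subgroup N)).index ∣ q ^ m := hm ▸ Subgroup.index_dvd_of_le le_sup_left
    have h2 : (K ⊔ (S : Subgroup N)).index ∣ (S : Subgroup N).index :=
      Subgroup.index_dvd_of_le le_sup_right
    have h3 : Nat.Coprime (q ^ m) (S : Subgroup N).index :=
      Nat.Coprime.pow_left _ ((Nat.Prime.coprime_iff_not_dvd Fact.out).2 S.not_dvd_index)
    exact Nat.eq_one_of_dvd_coprimes h3 h1 h2
  have hn : n ∈ K ⊔ (S : Subgroup N) := htop ▸ Subgroup.mem_top n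
  obtain ⟨k, hk, s, hs, rfl⟩ := Subgroup.mem_sup_of_normal_left.1 hn
  refine ⟨k, ?_, s, hs, rfl⟩
  have hdisj : Disjoint K D := by
    obtain ⟨j, hj⟩ := IsPGroup.iff_card.1 hDq
    refine Subgroup.disjoint_of_coprime_natCard ?_
    rw [hj]
    exact hcop.pow_right j
  rw [Subgroup.mem_centralizer_iff]
  intro d hd
  exact (Subgroup.commute_of_normal_of_disjoint K D hK hD hdisj k d hk hd).symm.eq

open scoped Pointwise in
theorem mem_smul_sylow {q : ℕ} {G : Type*} [Group G] {R : Sylow q G} {g x : G} :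
    x ∈ g • R ↔ g⁻¹ * x * g ∈ R := by
  change x ∈ MulAut.conj g • (R : Subgroup G) ↔ _
  rw [Subgroup.mem_pointwise_smul_iff_inv_smul_mem, ← map_inv]
  simp only [MulAut.smul_def, MulAut.conj_apply, inv_inv]
  exact Iff.rfl

/-- The local step: `q`-subgroups `A` and `B` of `N(D)` can be moved into a common Sylow
`q`-subgroup of `G` by an element centralizing `D`. -/
theorem exists_sylow_of_normalizer {q : ℕ} [Fact q.Prime] {G : Type*} [Group G] [Finite G]
    {D A B : Subgroup G} (hD : IsPGroup q D) (hA : IsPGroup q A) (hB : IsPGroup q B)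
    (hAN : A ≤ Subgroup.normalizer (D : Set G)) (hBN : B ≤ Subgroup.normalizer (D : Set G))
    (h : HasNormalComplement q (Subgroup.normalizer (D : Set G))) :
    ∃ k ∈ Subgroup.centralizer (D : Set G), ∃ R : Sylow q G,
      A ≤ R ∧ B ≤ (k • R : Sylow q G) := by
  set N := Subgroup.normalizer (D : Set G) with hN
  have hDN : (D.subgroupOf N).Normal := Subgroup.normal_in_normalizer
  have sub : ∀ X : Subgroup G, IsPGroup q X → IsPGroup q (X.subgroupOf N) := fun X hX =>
    hX.comap_of_injective N.subtype N.subtype_injective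
  obtain ⟨S, hS⟩ := (sub A hA).exists_le_sylow
  obtain ⟨T, hT⟩ := (sub B hB).exists_le_sylow
  obtain ⟨n, hn⟩ := MulAction.exists_smul_eq N S T
  obtain ⟨k, hk, s, hs, rfl⟩ := h.exists_mul hDN (sub D hD) S n
  have hsS : s • S = S := Sylow.smul_eq_iff_mem_normalizer.2 (Subgroup.le_normalizer hs)
  rw [mul_smul, hsS] at hn
  obtain ⟨R, hR⟩ := (S.2.map N.subtype).exists_le_sylow
  refine ⟨k, ?_, R, ?_, ?_⟩
  · rw [Subgroup.mem_centralizer_iff] at hk ⊢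
    intro d hd
    exact congrArg Subtype.val (hk ⟨d, Subgroup.le_normalizer hd⟩ hd)
  · exact fun a ha => hR ⟨⟨a, hAN ha⟩, hS ha, rfl⟩
  · intro b hb
    have hbT : (⟨b, hBN hb⟩ : N) ∈ T := hT hb
    rw [← hn, mem_smul_sylow] at hbT
    exact mem_smul_sylow.2 (hR ⟨_, hbT, rfl⟩)

/-- Normalizers grow in `q`-groups. -/
theorem IsPGroup.exists_mem_normalizer {q : ℕ} [Fact q.Prime] {G : Type*} [Group G] [Finite G]
    {D P : Subgroup G} (hP : IsPGroup q P) (h : D < P) :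
    ∃ x ∈ P, x ∈ Subgroup.normalizer (D : Set G) ∧ x ∉ D := by
  have : Group.IsNilpotent P := hP.isNilpotent
  have h1 := Group.normalizerCondition_of_isNilpotent (G := P) (D.subgroupOf P)
    (lt_top_iff_ne_top.2 fun he => h.not_ge (Subgroup.subgroupOf_eq_top.1 he))
  rw [← Subgroup.subgroupOf_normalizer_eq h.le] at h1
  obtain ⟨x, hxN, hxD⟩ := SetLike.exists_of_lt h1
  exact ⟨x, x.2, hxN, hxD⟩

/-- Two Sylow `q`-subgroups are conjugate under the centralizer of their intersection, as soon as
normalizers of nontrivial `q`-subgroups have normal `q`-complements. The induction is downward on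
the order of the intersection. -/
theorem exists_centralizer_smul_eq {q : ℕ} [Fact q.Prime] {G : Type*} [Group G] [Finite G]
    (hloc : ∀ D : Subgroup G, D ≠ ⊥ → IsPGroup q D →
      HasNormalComplement q (Subgroup.normalizer (D : Set G))) :
    ∀ (n : ℕ) (P Q : Sylow q G), Nat.card G - Nat.card (P ⊓ Q : Subgroup G) = n →
      ∃ g ∈ Subgroup.centralizer ((P ⊓ Q : Subgroup G) : Set G), g • P = Q := by
  intro n
  induction n using Nat.strong_induction_on with
  | _ n ih =>
  intro P Q hn
  set D : Subgroup G := P ⊓ Q with hDdef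
  have hDP : D ≤ P := inf_le_left
  have hDQ : D ≤ Q := inf_le_right
  by_cases hb : D = ⊥
  · obtain ⟨g, hg⟩ := MulAction.exists_smul_eq G P Q
    refine ⟨g, ?_, hg⟩
    rw [hb, Subgroup.mem_centralizer_iff]
    rintro x rfl
    simp
  by_cases hPQ : P = Q
  · exact ⟨1, one_mem _, by rw [one_smul, hPQ]⟩
  have hDP' : D < P := lt_of_le_of_ne hDP fun he =>
    hPQ (Sylow.ext (P.is_maximal' Q.2 (inf_eq_left.1 he)).symm)
  have hDQ' : D < Q := lt_of_le_of_ne hDQ fun he =>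
    hPQ (Sylow.ext (Q.is_maximal' P.2 (inf_eq_right.1 he)))
  have hDq : IsPGroup q D := P.2.to_le hDP
  set N := Subgroup.normalizer (D : Set G) with hN
  obtain ⟨k, hk, R, hR1, hR2⟩ := exists_sylow_of_normalizer (A := P ⊓ N) (B := Q ⊓ N) hDq
    (P.2.to_le inf_le_left) (Q.2.to_le inf_le_left) inf_le_right inf_le_right (hloc D hb hDq)
  -- the induction hypothesis applies to `P, R` and to `k • R, Q`
  have step : ∀ S T : Sylow q G, D < (S ⊓ T : Subgroup G) →
      ∃ g ∈ Subgroup.centralizer (D : Set G), g • S = T := by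
    intro S T hST
    have hc : Nat.card D < Nat.card (S ⊓ T : Subgroup G) := by
      refine lt_of_le_of_ne (Subgroup.card_le_of_le hST.le) fun he => hST.ne ?_
      exact Subgroup.eq_of_le_of_card_ge hST.le he.ge
    have hle := Subgroup.card_le_card_group (S ⊓ T : Subgroup G)
    obtain ⟨g, hg, hgS⟩ := ih _ (by omega) S T rfl
    exact ⟨g, Subgroup.centralizer_le hST.le hg, hgS⟩
  have hNle : D ≤ N := Subgroup.le_normalizer
  obtain ⟨a, ha, haR⟩ := step P R (by
    obtain ⟨x, hxP, hxN, hxD⟩ := P.2.exists_mem_normalizer hDP'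
    exact lt_of_le_of_ne (le_inf hDP ((le_inf hDP hNle).trans hR1))
      fun he => hxD (he ▸ ⟨hxP, hR1 ⟨hxP, hxN⟩⟩))
  obtain ⟨b, hb', hbQ⟩ := step (k • R) Q (by
    obtain ⟨x, hxQ, hxN, hxD⟩ := Q.2.exists_mem_normalizer hDQ'
    exact lt_of_le_of_ne (le_inf ((le_inf hDQ hNle).trans hR2) hDQ)
      fun he => hxD (he ▸ ⟨hR2 ⟨hxQ, hxN⟩, hxQ⟩))
  exact ⟨b * k * a, mul_mem (mul_mem hb' hk) ha, by rw [mul_smul, mul_smul, haR, hbQ]⟩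

/-- Under the same hypothesis a Sylow `q`-subgroup controls its own fusion. -/
theorem exists_fusion {q : ℕ} [Fact q.Prime] {G : Type*} [Group G] [Finite G]
    (hloc : ∀ D : Subgroup G, D ≠ ⊥ → IsPGroup q D →
      HasNormalComplement q (Subgroup.normalizer (D : Set G)))
    (P : Sylow q G) (hP : (P : Subgroup G) ≠ ⊥) {g x : G} (hx : x ∈ P) (hgx : g * x * g⁻¹ ∈ P) :
    ∃ u ∈ P, g * x * g⁻¹ = u * x * u⁻¹ := by
  obtain ⟨c, hc, hcP⟩ := exists_centralizer_smul_eq hloc _ (g • P) P rfl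
  have hcx : c * (g * x * g⁻¹) * c⁻¹ = g * x * g⁻¹ := by
    rw [mul_inv_eq_iff_eq_mul]
    refine (Subgroup.mem_centralizer_iff.1 hc _ ⟨?_, hgx⟩).symm
    refine mem_smul_sylow.2 ?_
    simpa [mul_assoc] using hx
  rw [← mul_smul, Sylow.smul_eq_iff_mem_normalizer] at hcP
  have hPN : (P : Subgroup G) ≤ Subgroup.normalizer (P : Set G) := Subgroup.le_normalizer
  obtain ⟨k, hk, s, hs, hks⟩ := (hloc P hP P.2).exists_mul
    (D := (P : Subgroup G).subgroupOf (Subgroup.normalizer (P : Set G)))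
    Subgroup.normal_in_normalizer
    (P.2.comap_of_injective _ (Subgroup.subtype_injective _))
    (P.subtype hPN) ⟨c * g, hcP⟩
  have hsP : (s : G) ∈ P := hs
  refine ⟨s, hsP, ?_⟩
  have hks' : (k : G) * s = c * g := congrArg Subtype.val hks
  have hxs : (s : G) * x * (s : G)⁻¹ ∈ P := mul_mem (mul_mem hsP hx) (inv_mem hsP)
  have hkc : (k : G) * (s * x * (s : G)⁻¹) * (k : G)⁻¹ = s * x * (s : G)⁻¹ := by
    rw [mul_inv_eq_iff_eq_mul]
    exact (congrArg Subtype.val (Subgroup.mem_centralizer_iff.1 hk ⟨_, hPN hxs⟩ hxs)).symm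
  calc g * x * g⁻¹ = (c * g) * x * (c * g)⁻¹ := by rw [← hcx]; group
    _ = (k * s) * x * (k * s : G)⁻¹ := by rw [hks']
    _ = k * (s * x * (s : G)⁻¹) * (k : G)⁻¹ := by group
    _ = _ := hkc

open scoped commutatorElement in
/-- A simple group of order divisible by `q` all of whose proper subgroups have normal
`q`-complements is abelian, as in Frobenius' normal complement theorem. If it were not abelian it
would be perfect, so a Sylow `q`-subgroup would equal its focal subgroup; since it controls its own
fusion, it would then be a perfect nontrivial `q`-group. -/
theorem commute_of_isSimpleGroup {q : ℕ} [Fact q.Prime] {G : Type*} [Group G] [Finite G]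
    [IsSimpleGroup G] (hq : q ∣ Nat.card G)
    (h : ∀ H : Subgroup G, H ≠ ⊤ → HasNormalComplement q H) (a b : G) : a * b = b * a := by
  obtain ⟨P⟩ : Nonempty (Sylow q G) := inferInstance
  have hP1 : 1 < Nat.card P :=
    lt_of_lt_of_le (Fact.out : q.Prime).one_lt
      (Nat.le_of_dvd Nat.card_pos (P.dvd_card_of_dvd_card hq))
  have hPb : (P : Subgroup G) ≠ ⊥ := (Subgroup.one_lt_card_iff_ne_bot _).1 hP1
  have : Nontrivial P := Finite.one_lt_card_iff_nontrivial.1 hP1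
  by_contra hab
  have hZ : Subgroup.center G ≠ ⊤ := fun hZ =>
    hab ((Subgroup.mem_center_iff.1 (hZ ▸ Subgroup.mem_top b : b ∈ Subgroup.center G)) a)
  have hcomm : commutator G = ⊤ := by
    refine (Subgroup.Normal.eq_bot_or_eq_top inferInstance).resolve_left fun hb => hZ ?_
    exact (commutator_eq_bot_iff_center_eq_top G).1 hb
  have hPnil : Group.IsNilpotent P := P.2.isNilpotent
  have hPsol : Group.IsSolvable P := inferInstance
  have hsol : ¬ Group.IsSolvable G := fun hs =>
    hab (IsSimpleGroup.comm_iff_isSolvable.2 hs a b)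
  have hloc : ∀ D : Subgroup G, D ≠ ⊥ → IsPGroup q D →
      HasNormalComplement q (Subgroup.normalizer (D : Set G)) := by
    refine fun D hD hDq => h _ fun hN => ?_
    rw [Subgroup.normalizer_eq_top_iff] at hN
    have : D = ⊤ := hN.eq_bot_or_eq_top.resolve_left hD
    subst this
    have := hDq.isNilpotent
    exact hsol (Group.isSolvable_of_surjective (f := (⊤ : Subgroup G).subtype)
      fun x => ⟨⟨x, trivial⟩, rfl⟩)
  have hfoc : (P : Subgroup G) ≤ ⁅(P : Subgroup G), (P : Subgroup G)⁆ := by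
    have h1 := Subgroup.commutator_inf_eq_focalSubgroup P
    rw [hcomm, top_inf_eq, Subgroup.focalSubgroup_def] at h1
    conv_lhs => rw [h1]
    rw [Subgroup.closure_le]
    rintro _ ⟨hg, x, hx, u, rfl⟩
    have hux : u * x⁻¹ * u⁻¹ ∈ P := by
      have := mul_mem (inv_mem hx) hg
      rw [commutatorElement_def] at this
      have e : u * x⁻¹ * u⁻¹ = x⁻¹ * (x * u * x⁻¹ * u⁻¹) := by group
      rw [e]
      exact this
    obtain ⟨v, hv, hvx⟩ := exists_fusion hloc P hPb (inv_mem hx) hux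
    have : ⁅x, u⁆ = ⁅x, v⁆ := by
      rw [commutatorElement_def, commutatorElement_def, mul_assoc x, mul_assoc x,
        mul_assoc x, mul_assoc x, hvx]
    rw [this]
    exact Subgroup.commutator_mem_commutator hx hv
  have hlt := Group.IsSolvable.commutator_lt_top_of_nontrivial P
  refine hlt.ne ?_
  rw [← Subgroup.map_subtype_commutator] at hfoc
  rw [eq_top_iff]
  intro x _
  obtain ⟨y, hy, hyx⟩ := hfoc x.2
  rwa [← Subtype.ext hyx]

/-! ### Groups whose subgroup lattice is catenarian -/

/-- All saturated chains of subgroups from `⊥` to `⊤` have the same length. -/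
def CatGroup (G : Type*) [Group G] : Prop :=
  ∀ n m, SatChain (⊥ : Subgroup G) ⊤ n → SatChain (⊥ : Subgroup G) ⊤ m → n = m

section

variable {G : Type*} [Group G]

theorem SatChain.comap_mk' (N : Subgroup G) [N.Normal] {n : ℕ}
    (h : SatChain (⊥ : Subgroup (G ⧸ N)) ⊤ n) : SatChain N ⊤ n := by
  have := h.map (covBy_comap_of_surjective (QuotientGroup.mk'_surjective N))
  rwa [MonoidHom.comap_bot, QuotientGroup.ker_mk', Subgroup.comap_top] at this

theorem SatChain.map_subtype (H : Subgroup G) {n : ℕ}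
    (h : SatChain (⊥ : Subgroup H) ⊤ n) : SatChain ⊥ H n := by
  have := h.map (covBy_map_of_injective H.subtype_injective)
  rwa [Subgroup.map_bot, ← MonoidHom.range_eq_map, Subgroup.range_subtype] at this

variable [Finite G]

theorem CatGroup.subgroup (h : CatGroup G) (H : Subgroup G) : CatGroup H := by
  intro n m hn hm
  obtain ⟨l, hl⟩ := SatChain.exists_of_le (le_top : H ≤ ⊤)
  exact Nat.add_right_cancel (h _ _ (hn.map_subtype.trans hl) (hm.map_subtype.trans hl))

theorem CatGroup.quotient (h : CatGroup G) (N : Subgroup G) [N.Normal] : CatGroup (G ⧸ N) := by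
  intro n m hn hm
  obtain ⟨l, hl⟩ := SatChain.exists_of_le (bot_le : ⊥ ≤ N)
  exact Nat.add_left_cancel (h _ _ (hl.trans hn.comap_mk') (hl.trans hm.comap_mk'))

theorem relIndex_ne_zero_of_finite (A B : Subgroup G) : A.relIndex B ≠ 0 :=
  Subgroup.index_ne_zero_of_finite

open ArithmeticFunction in
theorem SatChain.le_cardFactors {A B : Subgroup G} {n : ℕ} (h : SatChain A B n) :
    n ≤ cardFactors (A.relIndex B) := by
  induction h with
  | refl a => simp
  | @cons a b c n hab hbc ih =>
    rw [← Subgroup.relIndex_mul_relIndex a b c hab.le hbc.le,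
      cardFactors_mul (relIndex_ne_zero_of_finite _ _)
        (relIndex_ne_zero_of_finite _ _)]
    have h1 : 1 ≤ cardFactors (a.relIndex b) := by
      rw [Nat.one_le_iff_ne_zero, Ne, cardFactors_eq_zero_iff_eq_zero_or_one]
      rintro (h0 | h1)
      · exact relIndex_ne_zero_of_finite _ _ h0
      · exact hab.lt.not_ge (Subgroup.relIndex_eq_one.1 h1)
    omega

open ArithmeticFunction in
/-- If some chain attains the maximal conceivable length `Ω |G|`, then by catenarity every chain
does, which forces all its steps to have prime index. -/
theorem CatGroup.primeCovers (h : CatGroup G)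
    (hc : SatChain (⊥ : Subgroup G) ⊤ (cardFactors (Nat.card G))) : PrimeCovers G := by
  intro H K hHK
  obtain ⟨i, hi⟩ := SatChain.exists_of_le (bot_le : ⊥ ≤ H)
  obtain ⟨j, hj⟩ := SatChain.exists_of_le (le_top : K ≤ ⊤)
  have h1 := h _ _ hc (hi.trans (.cons hHK hj))
  have h2 := hi.le_cardFactors
  have h3 := hj.le_cardFactors
  have ne : ∀ A B : Subgroup G, A.relIndex B ≠ 0 := relIndex_ne_zero_of_finite
  have h4 : cardFactors (Nat.card G) = cardFactors ((⊥ : Subgroup G).relIndex H) +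
      (cardFactors (H.relIndex K) + cardFactors (K.relIndex ⊤)) := by
    rw [← cardFactors_mul (ne _ _) (ne _ _), Subgroup.relIndex_mul_relIndex _ _ _ hHK.le le_top,
      ← cardFactors_mul (ne _ _) (ne _ _), Subgroup.relIndex_mul_relIndex _ _ _ bot_le le_top,
      Subgroup.relIndex_bot_left, Subgroup.card_top]
  have h5 := (SatChain.single hHK).le_cardFactors
  exact cardFactors_eq_one_iff_prime.1 (by omega)

end

open ArithmeticFunction in
/-- Catenarity is inherited by subgroups and quotients, so chains of length `Ω` in a normal subgroup
and in the quotient by it can be concatenated; this leaves simple groups, which are cyclic of prime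
order. -/
theorem CatGroup.satChain : ∀ (n : ℕ) (G : Type*) [Group G] [Finite G], Nat.card G = n →
    CatGroup G → SatChain (⊥ : Subgroup G) ⊤ (cardFactors (Nat.card G)) := by
  intro n
  induction n using Nat.strong_induction_on with
  | _ n ih =>
  intro G _ _ hn h
  rcases (Nat.card_pos (α := G)).nat_succ_le.eq_or_lt with h1 | h1
  · have : (⊥ : Subgroup G) = ⊤ := by
      rw [← Subgroup.card_eq_iff_eq_top, Subgroup.card_bot, ← h1]
    rw [this, ← h1]
    simpa using SatChain.refl (⊤ : Subgroup G)
  have hnt : Nontrivial G := Finite.one_lt_card_iff_nontrivial.1 h1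
  have hsub : ∀ H : Subgroup G, H ≠ ⊤ →
      SatChain (⊥ : Subgroup H) ⊤ (cardFactors (Nat.card H)) := fun H hH =>
    ih _ (hn ▸ lt_of_le_of_ne (Subgroup.card_le_card_group H)
      fun he => hH (Subgroup.eq_top_of_card_eq H he)) H rfl (h.subgroup H)
  by_cases hsimple : IsSimpleGroup G
  · -- a simple group is abelian by the fusion argument at the smallest prime divisor of its order
    have : Fact (Nat.card G).minFac.Prime := ⟨Nat.minFac_prime h1.ne'⟩
    have hcomm := commute_of_isSimpleGroup (G := G) (Nat.minFac_dvd (Nat.card G)) fun H hH =>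
      PrimeCovers.hasNormalComplement Fact.out _ H rfl ((h.subgroup H).primeCovers (hsub H hH))
        fun p hp hpH => Nat.minFac_le_of_dvd hp.two_le (hpH.trans H.card_subgroup_dvd_card)
    let _ : CommGroup G := { ‹Group G› with mul_comm := hcomm }
    have hp : (Nat.card G).Prime := IsSimpleGroup.prime_card
    rw [cardFactors_eq_one_iff_prime.2 hp]
    refine .single (covBy_of_eq_or_eq bot_lt_top fun K _ _ => ?_)
    rcases (Nat.dvd_prime hp).1 K.card_subgroup_dvd_card with hK | hK
    · exact Or.inl (Subgroup.card_eq_one.1 hK)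
    · exact Or.inr (Subgroup.eq_top_of_card_eq K hK)
  · obtain ⟨N, hN, hb, ht⟩ : ∃ N : Subgroup G, N.Normal ∧ N ≠ ⊥ ∧ N ≠ ⊤ := by
      by_contra! hc
      exact hsimple ⟨fun N hN => or_iff_not_imp_left.2 (hc N hN)⟩
    have hN1 : 1 < Nat.card N := N.one_lt_card_iff_ne_bot.2 hb
    have hlt : Nat.card (G ⧸ N) < n := by
      rw [← Subgroup.index_eq_card, ← hn, ← N.card_mul_index]
      exact lt_mul_left (Nat.pos_of_ne_zero Subgroup.index_ne_zero_of_finite) hN1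
    rw [← N.card_mul_index, Subgroup.index_eq_card,
      cardFactors_mul Nat.card_pos.ne' Nat.card_pos.ne']
    exact ((hsub N ht).map_subtype).trans (ih _ hlt (G ⧸ N) rfl (h.quotient N)).comap_mk'

theorem CatGroup.isSupersolvableLattice {G : Type*} [Group G] [Finite G] (h : CatGroup G) :
    IsSupersolvableLattice (Subgroup G) :=
  (PrimeCovers.normalChain _ G rfl (h.primeCovers (h.satChain _ G rfl))).isSupersolvableLattice

/-! ### Passage to intermediate fields -/

theorem latticeGen.of_map_dual {α β : Type*} [Lattice α] [Lattice β] (e : α ≃o βᵒᵈ) {s : Set α}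
    {x : α} (h : latticeGen s x) :
    latticeGen ((fun a => OrderDual.ofDual (e a)) '' s) (OrderDual.ofDual (e x)) := by
  induction h with
  | base hx => exact .base ⟨_, hx, rfl⟩
  | sup _ _ ih1 ih2 => rw [map_sup, ofDual_sup]; exact .inf ih1 ih2
  | inf _ _ ih1 ih2 => rw [map_inf, ofDual_inf]; exact .sup ih1 ih2

/-- Supersolvability is invariant under lattice anti-isomorphisms. -/
theorem IsSupersolvableLattice.of_dual {α β : Type*} [Lattice α] [Lattice β] (e : α ≃o βᵒᵈ)
    (h : IsSupersolvableLattice β) : IsSupersolvableLattice α := by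
  obtain ⟨C, hC, hd⟩ := h
  let f : α → β := fun a => OrderDual.ofDual (e a)
  have hf : ∀ a b, f a ≤ f b ↔ b ≤ a := fun a b => e.le_iff_le
  have hbij : Function.Bijective f := e.bijective
  have himg : ∀ s : Set α, IsChain (· ≤ ·) s → IsChain (· ≤ ·) (f '' s) := by
    rintro s hs _ ⟨a, ha, rfl⟩ _ ⟨b, hb, rfl⟩ _
    simpa [hf] using hs.total hb ha
  have hpre : ∀ s : Set β, IsChain (· ≤ ·) s → IsChain (· ≤ ·) (f ⁻¹' s) := by
    intro s hs a ha b hb _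
    have := hs.total (show f b ∈ s from hb) (show f a ∈ s from ha)
    simpa [hf] using this
  refine ⟨f ⁻¹' C, ⟨hpre C hC.1, fun t ht hCt => ?_⟩, fun D hD x y z hx hy hz => ?_⟩
  · have := hC.2 (himg t ht) fun c hc => by
      obtain ⟨a, rfl⟩ := hbij.2 c
      exact ⟨a, hCt hc, rfl⟩
    rw [this, Set.preimage_image_eq _ hbij.1]
  · have himage : f '' (f ⁻¹' C ∪ D) = C ∪ f '' D := by
      rw [Set.image_union, Set.image_preimage_eq _ hbij.2]
    have tr : ∀ w, latticeGen (f ⁻¹' C ∪ D) w → latticeGen (C ∪ f '' D) (f w) := fun w hw =>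
      himage ▸ hw.of_map_dual e
    have hdist := hd (f '' D) (himg D hD)
    -- the dual distributive law, deduced from the distributive law on the generated sublattice
    have key : f x ⊔ (f y ⊓ f z) = (f x ⊔ f y) ⊓ (f x ⊔ f z) := by
      rw [hdist _ _ _ (.sup (tr x hx) (tr y hy)) (tr x hx) (tr z hz),
        inf_eq_right.2 (le_sup_left : f x ≤ f x ⊔ f y),
        inf_comm (f x ⊔ f y), hdist _ _ _ (tr z hz) (tr x hx) (tr y hy), ← sup_assoc,
        inf_comm (f z), sup_inf_self, inf_comm (f z)]
    apply hbij.1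
    have es : ∀ a b, f (a ⊔ b) = f a ⊓ f b := fun a b => by
      simp only [f]; rw [map_sup, ofDual_sup]
    have ei : ∀ a b, f (a ⊓ b) = f a ⊔ f b := fun a b => by
      simp only [f]; rw [map_inf, ofDual_inf]
    rw [ei, es, es, ei, ei, key]

/-- A finite Galois field extension `k ⊂ L` is catenarian iff the
lattice `[k,L]` of intermediate fields is supersolvable. -/
theorem stmt_19 {k L : Type*} [Field k] [Field L] [Algebra k L]
    [FiniteDimensional k L] [IsGalois k L] :
    IsCatenarianFromTo (⊥ : IntermediateField k L) ⊤ ↔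
      IsSupersolvableLattice (IntermediateField k L) := by
  let e : IntermediateField k L ≃o (Subgroup Gal(L/k))ᵒᵈ :=
    IsGalois.intermediateFieldEquivSubgroup
  have : Finite (IntermediateField k L) := Finite.of_injective e e.injective
  refine ⟨fun h => ?_, fun h => h.isCatenarian⟩
  rw [isCatenarianFromTo_iff] at h
  have hcat : CatGroup Gal(L/k) := by
    have key : ∀ n, SatChain (⊥ : Subgroup Gal(L/k)) ⊤ n →
        SatChain (⊥ : IntermediateField k L) ⊤ n := by
      intro n hn
      have := hn.map_anti (f := fun H => e.symm (OrderDual.toDual H)) fun a b hab =>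
        (apply_covBy_apply_iff e.symm).2 hab.toDual
      rwa [OrderDual.toDual_top, OrderDual.toDual_bot, map_bot, map_top] at this
    exact fun n m hn hm => h n m (key n hn) (key m hm)
  exact hcat.isSupersolvableLattice.of_dual e
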